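/- Let q : (0,∞) → (0,∞) satisfy q(t) → ∞ as t → ∞, and fix a constant A > 1. Then lim_{t→∞} (q(t))^{q(t)} [∫_A^∞ z^{q(t)} e^{−q(t) z} dz] / Γ(q(t)) = 0. -/

import Mathlib

open MeasureTheory Set Filter Real

/-!
The quantity `q ^ q * ∫ z in Ioi A, z ^ q * exp (-(q * z)) / Γ(q)` is the probability that a gamma
variable of shape `q + 1` and rate `q`, whose mean `1 + 1 / q` tends to `1`, exceeds `A > 1`.
Chernoff's method, tilting by `exp (s * z)` with `s = q * (1 - 1 / A)`, bounds it by
`A * (A * exp (1 - A)) ^ q`, and `A * exp (1 - A) < 1` because `A < exp (A - 1)`.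
-/

lemma mul_exp_one_sub_lt_one {x : ℝ} (hx : x ≠ 1) : x * exp (1 - x) < 1 := by
  have hlt : x < exp (x - 1) := by
    simpa only [sub_add_cancel] using add_one_lt_exp (sub_ne_zero.mpr hx)
  calc x * exp (1 - x) < exp (x - 1) * exp (1 - x) := by gcongr
    _ = 1 := by rw [← exp_add, sub_add_sub_cancel, sub_self, exp_zero]

lemma integrableOn_Ioi_rpow_mul_exp_neg_mul {a r : ℝ} (ha : 0 < a) (hr : 0 < r) :
    IntegrableOn (fun z ↦ z ^ (a - 1) * exp (-(r * z))) (Ioi 0) := by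
  simpa only [rpow_one, neg_mul] using
    integrableOn_rpow_mul_exp_neg_mul_rpow (s := a - 1) (p := 1) (by linarith) one_pos hr

lemma setIntegral_Ioi_rpow_mul_exp_neg_mul_le {a r s x : ℝ} (ha : 0 < a) (hs : 0 ≤ s) (hsr : s < r)
    (hx : 0 ≤ x) :
    ∫ z in Ioi x, z ^ (a - 1) * exp (-(r * z)) ≤
      exp (-(s * x)) * ((1 / (r - s)) ^ a * Gamma a) := by
  have htilt : IntegrableOn (fun z ↦ exp (-(s * x)) * (z ^ (a - 1) * exp (-((r - s) * z))))
      (Ioi 0) :=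
    (integrableOn_Ioi_rpow_mul_exp_neg_mul ha (sub_pos.mpr hsr)).const_mul _
  have hsub : Ioi x ⊆ Ioi 0 := Ioi_subset_Ioi hx
  calc ∫ z in Ioi x, z ^ (a - 1) * exp (-(r * z))
      ≤ ∫ z in Ioi x, exp (-(s * x)) * (z ^ (a - 1) * exp (-((r - s) * z))) := by
        refine setIntegral_mono_on ((integrableOn_Ioi_rpow_mul_exp_neg_mul ha
          (hs.trans_lt hsr)).mono_set hsub) (htilt.mono_set hsub) measurableSet_Ioi fun z hz ↦ ?_
        have hz0 : 0 < z := hsub hz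
        have hexp : exp (-(r * z)) ≤ exp (-(s * x)) * exp (-((r - s) * z)) := by
          rw [← exp_add, exp_le_exp]
          linarith [mul_le_mul_of_nonneg_left (le_of_lt hz) hs]
        rw [mul_left_comm]
        gcongr
    _ ≤ ∫ z in Ioi 0, exp (-(s * x)) * (z ^ (a - 1) * exp (-((r - s) * z))) := by
        refine setIntegral_mono_set htilt ?_ hsub.eventuallyLE
        filter_upwards [self_mem_ae_restrict measurableSet_Ioi] with z hz
        have hz0 : 0 < z := hz
        positivity
    _ = exp (-(s * x)) * ((1 / (r - s)) ^ a * Gamma a) := by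
        rw [integral_const_mul, integral_rpow_mul_exp_neg_mul_Ioi ha (sub_pos.mpr hsr)]

lemma rpow_self_mul_setIntegral_Ioi_div_Gamma_nonneg {A q : ℝ} (hA : 0 ≤ A) (hq : 0 ≤ q) :
    0 ≤ q ^ q * (∫ z in Ioi A, z ^ q * exp (-(q * z))) / Gamma q := by
  have htail : 0 ≤ ∫ z in Ioi A, z ^ q * exp (-(q * z)) :=
    setIntegral_nonneg measurableSet_Ioi fun z hz ↦
      mul_nonneg (rpow_nonneg (hA.trans (le_of_lt hz)) q) (exp_nonneg _)
  exact div_nonneg (mul_nonneg (rpow_nonneg hq q) htail) (Gamma_nonneg_of_nonneg hq)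

lemma rpow_self_mul_setIntegral_Ioi_div_Gamma_le {A q : ℝ} (hA : 1 ≤ A) (hq : 0 < q) :
    q ^ q * (∫ z in Ioi A, z ^ q * exp (-(q * z))) / Gamma q ≤ A * (A * exp (1 - A)) ^ q := by
  have hA0 : 0 < A := by linarith
  have hGamma : 0 < Gamma q := Gamma_pos_of_pos hq
  have htail : ∫ z in Ioi A, z ^ q * exp (-(q * z)) ≤
      exp ((1 - A) * q) * ((A / q) ^ (q + 1) * Gamma (q + 1)) := by
    have hs : 0 ≤ q - q / A := sub_nonneg.mpr (div_le_self hq.le hA)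
    have hsr : q - q / A < q := sub_lt_self q (by positivity)
    have hexponent : -((q - q / A) * A) = (1 - A) * q := by field_simp; ring
    simpa only [add_sub_cancel_right, sub_sub_cancel, one_div_div, hexponent] using
      setIntegral_Ioi_rpow_mul_exp_neg_mul_le (a := q + 1) (by linarith) hs hsr hA0.le
  rw [div_le_iff₀ hGamma]
  calc q ^ q * ∫ z in Ioi A, z ^ q * exp (-(q * z))
      ≤ q ^ q * (exp ((1 - A) * q) * ((A / q) ^ (q + 1) * Gamma (q + 1))) := by gcongr
    _ = q ^ q * (exp ((1 - A) * q) * (A ^ q / q ^ q * (A / q) * (q * Gamma q))) := by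
        rw [Gamma_add_one hq.ne', rpow_add_one (by positivity), div_rpow hA0.le hq.le]
    _ = A * (A ^ q * exp ((1 - A) * q)) * Gamma q := by
        have hqq : q ^ q ≠ 0 := (rpow_pos_of_pos hq q).ne'
        field_simp [hqq]
    _ = A * (A * exp (1 - A)) ^ q * Gamma q := by
        rw [mul_rpow hA0.le (exp_nonneg _), ← exp_mul]

lemma tendsto_rpow_self_mul_setIntegral_Ioi_div_Gamma {A : ℝ} (hA : 1 < A) :
    Tendsto (fun q : ℝ ↦ q ^ q * (∫ z in Ioi A, z ^ q * exp (-(q * z))) / Gamma q)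
      atTop (nhds 0) := by
  have hA0 : 0 < A := by linarith
  have hratio : 0 < A * exp (1 - A) := by positivity
  have hgeom : Tendsto (fun q : ℝ ↦ A * (A * exp (1 - A)) ^ q) atTop (nhds 0) := by
    simpa only [mul_zero] using (tendsto_rpow_atTop_of_base_lt_one _ (by linarith)
      (mul_exp_one_sub_lt_one hA.ne')).const_mul A
  refine squeeze_zero' ?_ ?_ hgeom
  · filter_upwards [eventually_ge_atTop 0] with q hq
    exact rpow_self_mul_setIntegral_Ioi_div_Gamma_nonneg hA0.le hq
  · filter_upwards [eventually_gt_atTop 0] with q hq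
    exact rpow_self_mul_setIntegral_Ioi_div_Gamma_le hA.le hq

/-- Equation (3.4): if `q(t) → ∞` and `A > 1`, then
`q(t)^(q(t)) ∫_A^∞ z^(q(t)) e^(-q(t) z) dz / Γ(q(t)) → 0` as `t → ∞`. -/
theorem stmt_9
    (q : ℝ → ℝ) (hqpos : ∀ t : ℝ, 0 < t → 0 < q t)
    (hqtop : Tendsto q atTop atTop)
    (A : ℝ) (hA : 1 < A) :
    Tendsto (fun t =>
      q t ^ (q t) * (∫ z in Set.Ioi A, z ^ (q t) * Real.exp (-(q t * z))) /
        Real.Gamma (q t)) atTop (nhds 0) := by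
  exact (tendsto_rpow_self_mul_setIntegral_Ioi_div_Gamma hA).comp hqtop
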